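/- arXiv:2509.01638 — 9 statements merged into one kernel-verified Lean document; each statement's English description precedes it below -/
import Mathlib

section
/- Let R be a commutative ring, M an R-module, and K ≤ N ≤ M submodules. Then K is u-S-essential in M if and only if K is u-S-essential in N (viewing K as a submodule of the R-module N) and N is u-S-essential in M. -/
/-- `K` is a uniformly `S`-essential submodule of `M`: whenever a submodule `L`
satisfies `s₁ • (K ⊓ L) = 0` for some `s₁ ∈ S`, then `s₂ • L = 0` for some `s₂ ∈ S`. -/
def USEssential {R : Type*} [CommRing R] (S : Submonoid R) {M : Type*}
    [AddCommGroup M] [Module R M] (K : Submodule R M) : Prop :=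
  ∀ L : Submodule R M,
    (∃ s ∈ S, ∀ x ∈ K ⊓ L, s • x = 0) → ∃ s ∈ S, ∀ x ∈ L, s • x = 0

/-!
A linear map `f` with u-`S`-torsion kernel preserves and reflects u-`S`-torsion of submodules, so
`K ⊓ f(L) = f(f⁻¹(K) ⊓ L)` and `range f ⊓ L = f(f⁻¹(L))` carry tests of essentiality
along `f`. In particular, if `K ⊓ L` is torsion, then essentiality of `f⁻¹(K)` makes `range f ⊓ L`
torsion, and essentiality of `range f` makes `L` torsion.
-/

/-- A submodule `L` is u-`S`-torsion as a module: a single `s ∈ S` annihilates all of it. The notion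
is stated for submodules so that submodules of a fixed module can be compared without coercions. -/
def IsUSTorsion {R : Type*} [CommRing R] (S : Submonoid R) {M : Type*}
    [AddCommGroup M] [Module R M] (L : Submodule R M) : Prop :=
  ∃ s ∈ S, ∀ x ∈ L, s • x = 0

section

variable {R : Type*} [CommRing R] {S : Submonoid R}
  {M : Type*} [AddCommGroup M] [Module R M] {M' : Type*} [AddCommGroup M'] [Module R M']
  {f : M' →ₗ[R] M}

theorem isUSTorsion_bot : IsUSTorsion S (⊥ : Submodule R M) :=
  ⟨1, S.one_mem, fun x hx => by rw [one_smul, (Submodule.mem_bot R).1 hx]⟩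

namespace IsUSTorsion

theorem mono {L₁ L₂ : Submodule R M} (hL : IsUSTorsion S L₂) (hle : L₁ ≤ L₂) :
    IsUSTorsion S L₁ :=
  let ⟨s, hs, hsL⟩ := hL
  ⟨s, hs, fun x hx => hsL x (hle hx)⟩

theorem map {L : Submodule R M'} (hL : IsUSTorsion S L) (f : M' →ₗ[R] M) :
    IsUSTorsion S (L.map f) := by
  obtain ⟨s, hs, hsL⟩ := hL
  refine ⟨s, hs, ?_⟩
  rintro _ ⟨y, hy, rfl⟩
  rw [← map_smul, hsL y hy, map_zero]

theorem of_map {L : Submodule R M'} (hL : IsUSTorsion S (L.map f))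
    (hf : IsUSTorsion S (LinearMap.ker f)) : IsUSTorsion S L := by
  obtain ⟨s, hs, hsL⟩ := hL
  obtain ⟨t, ht, htker⟩ := hf
  refine ⟨t * s, S.mul_mem ht hs, fun y hy => ?_⟩
  have hsy : s • y ∈ LinearMap.ker f := by
    rw [LinearMap.mem_ker, map_smul, hsL _ (Submodule.mem_map_of_mem hy)]
  rw [mul_smul, htker _ hsy]

theorem comap {L : Submodule R M} (hL : IsUSTorsion S L)
    (hf : IsUSTorsion S (LinearMap.ker f)) : IsUSTorsion S (L.comap f) :=
  (hL.mono (Submodule.map_comap_le f L)).of_map hf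

end IsUSTorsion

namespace USEssential

theorem mono {K N : Submodule R M} (hK : USEssential S K) (hle : K ≤ N) : USEssential S N :=
  fun L hNL => hK L (IsUSTorsion.mono hNL (inf_le_inf_right L hle))

theorem comap {K : Submodule R M} (hK : USEssential S K)
    (hf : IsUSTorsion S (LinearMap.ker f)) : USEssential S (K.comap f) := by
  intro L hKL
  have hKfL : IsUSTorsion S (K ⊓ L.map f) := by
    rw [inf_comm, Submodule.map_inf_eq_map_inf_comap, inf_comm]
    exact IsUSTorsion.map hKL f
  exact IsUSTorsion.of_map (hK (L.map f) hKfL) hf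

theorem of_comap {K : Submodule R M} (hK : USEssential S (K.comap f))
    (hrange : USEssential S (LinearMap.range f)) (hf : IsUSTorsion S (LinearMap.ker f)) :
    USEssential S K := by
  intro L hKL
  have hcomap : IsUSTorsion S (L.comap f) := hK (L.comap f) (IsUSTorsion.comap hKL hf)
  have hinf : IsUSTorsion S (LinearMap.range f ⊓ L) := by
    rw [← Submodule.map_comap_eq]
    exact hcomap.map f
  exact hrange L hinf

end USEssential

theorem uSEssential_iff_of_le_general {K : Submodule R M} (hf : IsUSTorsion S (LinearMap.ker f))
    (hK : K ≤ LinearMap.range f) :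
    USEssential S K ↔ USEssential S (K.comap f) ∧ USEssential S (LinearMap.range f) :=
  ⟨fun h => ⟨h.comap hf, h.mono hK⟩, fun ⟨hcomap, hrange⟩ => hcomap.of_comap hrange hf⟩

end

/-- Theorem (prop3 (1)): for submodules `K ≤ N ≤ M`, `K` is u-S-essential in `M` iff
`K` (viewed as a submodule of `N`) is u-S-essential in `N` and `N` is u-S-essential in `M`. -/
theorem uSEssential_iff_of_le {R : Type*} [CommRing R] [Nontrivial R] (S : Submonoid R)
    (hS0 : (0 : R) ∉ S) {M : Type*} [AddCommGroup M] [Module R M]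
    (K N : Submodule R M) (hKN : K ≤ N) :
    USEssential S K ↔ USEssential S (K.comap N.subtype) ∧ USEssential S N := by
  have hker : IsUSTorsion S (LinearMap.ker N.subtype) := N.ker_subtype ▸ isUSTorsion_bot
  simpa only [N.range_subtype] using
    uSEssential_iff_of_le_general hker (hKN.trans_eq N.range_subtype.symm)
end

section
/- Let R be a commutative ring, S a multiplicative subset of R, M an R-module, and H, K submodules of M. Then H ⊓ K is u-S-essential in M if and only if both H and K are u-S-essential in M. -/
namespace USEssential

variable {R : Type*} [CommRing R] {S : Submonoid R} {M : Type*} [AddCommGroup M] [Module R M]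
  {H K : Submodule R M}

theorem mono_s1 (hHK : H ≤ K) (hH : USEssential S H) : USEssential S K :=
  fun L ⟨s, hs, hKL⟩ ↦ hH L ⟨s, hs, fun x hx ↦ hKL x (inf_le_inf_right L hHK hx)⟩

theorem inf (hH : USEssential S H) (hK : USEssential S K) : USEssential S (H ⊓ K) := by
  intro L hL
  rw [inf_assoc] at hL
  exact hK L (hH (K ⊓ L) hL)

end USEssential

/-- Theorem (prop3 (2)): `H ⊓ K` is u-S-essential in `M` iff both `H` and `K` are
u-S-essential in `M`. -/
theorem uSEssential_inf_iff {R : Type*} [CommRing R] [Nontrivial R] (S : Submonoid R)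
    (hS0 : (0 : R) ∉ S) {M : Type*} [AddCommGroup M] [Module R M] (H K : Submodule R M) :
    USEssential S (H ⊓ K) ↔ USEssential S H ∧ USEssential S K :=
  ⟨fun h ↦ ⟨h.mono_s1 inf_le_left, h.mono_s1 inf_le_right⟩, fun ⟨hH, hK⟩ ↦ hH.inf hK⟩
end

section
/- Let R be a commutative ring, M an R-module, and K a submodule of M. If for every maximal ideal 𝔪 of R the submodule K is u-(R∖𝔪)-essential in M, then K is essential in M. -/
/-- `K` is an essential submodule of `M`. -/
def EssentialSub {R : Type*} [CommRing R] {M : Type*} [AddCommGroup M] [Module R M]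
    (K : Submodule R M) : Prop :=
  ∀ L : Submodule R M, K ⊓ L = ⊥ → L = ⊥

theorem eq_zero_of_forall_isMaximal_exists_smul_eq_zero {R M : Type*} [Semiring R]
    [AddCommMonoid M] [Module R M] {x : M}
    (hx : ∀ 𝔪 : Ideal R, 𝔪.IsMaximal → ∃ s ∉ 𝔪, s • x = 0) : x = 0 := by
  rw [← Ideal.torsionOf_eq_top_iff (R := R)]
  by_contra hne
  obtain ⟨𝔪, hmax, hle⟩ := Ideal.exists_le_maximal _ hne
  obtain ⟨s, hs, hsx⟩ := hx 𝔪 hmax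
  exact hs (hle ((Ideal.mem_torsionOf_iff x s).mpr hsx))

theorem USEssential.exists_mem_forall_smul_eq_zero_of_inf_eq_bot {R M : Type*} [CommRing R]
    [AddCommGroup M] [Module R M] {S : Submonoid R} {K L : Submodule R M}
    (hK : USEssential S K) (hKL : K ⊓ L = ⊥) : ∃ s ∈ S, ∀ x ∈ L, s • x = 0 := by
  refine hK L ⟨1, S.one_mem, fun x hx ↦ ?_⟩
  rw [one_smul, ← Submodule.mem_bot R, ← hKL]
  exact hx

/-- Proposition: if `K` is u-(R∖𝔪)-essential for every maximal ideal `𝔪` of `R`,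
then `K` is essential in `M`. -/
theorem essential_of_forall_maximal_uSEssential {R : Type*} [CommRing R] [Nontrivial R]
    {M : Type*} [AddCommGroup M] [Module R M] (K : Submodule R M)
    (h : ∀ (𝔪 : Ideal R) (hm : 𝔪.IsMaximal),
      USEssential (@Ideal.primeCompl R _ 𝔪 hm.isPrime) K) :
    EssentialSub K := by
  intro L hKL
  refine (Submodule.eq_bot_iff L).mpr fun x hx ↦
    eq_zero_of_forall_isMaximal_exists_smul_eq_zero (R := R) fun 𝔪 hm ↦ ?_
  obtain ⟨s, hs, hsL⟩ := (h 𝔪 hm).exists_mem_forall_smul_eq_zero_of_inf_eq_bot hKL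
  exact ⟨s, hs, hsL x hx⟩
end

section
/- Let R be a commutative ring, S a multiplicative subset of R, and M a prime R-module. Then every essential submodule of M is u-S-essential in M. -/
/-- `M` is a prime `R`-module: every nonzero submodule has the same annihilator as `M`. -/
def IsPrimeModule (R : Type*) [CommRing R] (M : Type*) [AddCommGroup M] [Module R M] : Prop :=
  ∀ N : Submodule R M, N ≠ ⊥ → N.annihilator = (⊤ : Submodule R M).annihilator

section

variable {R : Type*} [CommRing R] {M : Type*} [AddCommGroup M] [Module R M]

theorem IsPrimeModule.annihilator_inf_eq_of_essentialSub (hM : IsPrimeModule R M)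
    {K : Submodule R M} (hK : EssentialSub K) (L : Submodule R M) :
    (K ⊓ L).annihilator = L.annihilator := by
  obtain rfl | hL := eq_or_ne L ⊥
  · rw [inf_bot_eq]
  · have hKL : K ⊓ L ≠ ⊥ := mt (hK L) hL
    rw [hM (K ⊓ L) hKL, hM L hL]

theorem USEssential.of_annihilator_inf_le (S : Submonoid R) {K : Submodule R M}
    (h : ∀ L : Submodule R M, (K ⊓ L).annihilator ≤ L.annihilator) : USEssential S K := by
  rintro L ⟨s, hs, hsKL⟩
  have hsL : s ∈ L.annihilator := h L (Submodule.mem_annihilator.mpr hsKL)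
  exact ⟨s, hs, Submodule.mem_annihilator.mp hsL⟩

end

/-- Lemma: if `M` is a prime module, then every essential submodule of `M` is
u-S-essential. -/
theorem uSEssential_of_essential_of_primeModule {R : Type*} [CommRing R] [Nontrivial R]
    (S : Submonoid R) (hS0 : (0 : R) ∉ S) {M : Type*} [AddCommGroup M] [Module R M]
    (hM : IsPrimeModule R M) (K : Submodule R M) (hK : EssentialSub K) :
    USEssential S K := by
  exact .of_annihilator_inf_le S fun L => (hM.annihilator_inf_eq_of_essentialSub hK L).le
end

section
/- Let R be a commutative ring, M a prime R-module, and K a submodule of M. The following are equivalent: (1) K is essential in M; (2) K is u-(R∖𝔭)-essential in M for every prime ideal 𝔭 of R; (3) K is u-(R∖𝔪)-essential in M for every maximal ideal 𝔪 of R. -/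
theorem eq_bot_of_forall_isMaximal_exists_smul_eq_zero {R M : Type*} [Semiring R]
    [AddCommMonoid M] [Module R M] {L : Submodule R M}
    (h : ∀ 𝔪 : Ideal R, 𝔪.IsMaximal → ∃ s ∉ 𝔪, ∀ x ∈ L, s • x = 0) : L = ⊥ := by
  rw [← Submodule.annihilator_eq_top_iff]
  by_contra hproper
  obtain ⟨𝔪, h𝔪, hle⟩ := Ideal.exists_le_maximal L.annihilator hproper
  obtain ⟨s, hs, hsL⟩ := h 𝔪 h𝔪
  exact hs (hle (Submodule.mem_annihilator.mpr hsL))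

section Essential

variable {R : Type*} [CommRing R] {M : Type*} [AddCommGroup M] [Module R M]
  {S : Submonoid R} {K L : Submodule R M}

theorem EssentialSub.annihilator_inf_eq (hK : EssentialSub K) (hM : IsPrimeModule R M)
    (L : Submodule R M) : (K ⊓ L).annihilator = L.annihilator := by
  by_cases hKL : K ⊓ L = ⊥
  · rw [hKL, hK L hKL]
  · have hL : L ≠ ⊥ := ne_bot_of_le_ne_bot hKL inf_le_right
    rw [hM _ hKL, hM _ hL]

theorem EssentialSub.uSEssential (hK : EssentialSub K) (hM : IsPrimeModule R M)
    (S : Submonoid R) : USEssential S K := by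
  rintro L ⟨s, hs, hsKL⟩
  have hsL : s ∈ L.annihilator :=
    hK.annihilator_inf_eq hM L ▸ Submodule.mem_annihilator.mpr hsKL
  exact ⟨s, hs, Submodule.mem_annihilator.mp hsL⟩

theorem USEssential.exists_smul_eq_zero_of_disjoint (hK : USEssential S K)
    (hKL : Disjoint K L) : ∃ s ∈ S, ∀ x ∈ L, s • x = 0 :=
  hK L ⟨1, S.one_mem, fun x hx => by rwa [one_smul, ← Submodule.mem_bot R, ← hKL.eq_bot]⟩

theorem essentialSub_of_forall_isMaximal
    (h : ∀ (𝔪 : Ideal R) (h𝔪 : 𝔪.IsMaximal),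
      USEssential (@Ideal.primeCompl R _ 𝔪 h𝔪.isPrime) K) :
    EssentialSub K := fun _ hKL =>
  eq_bot_of_forall_isMaximal_exists_smul_eq_zero fun 𝔪 h𝔪 =>
    (h 𝔪 h𝔪).exists_smul_eq_zero_of_disjoint (disjoint_iff.mpr hKL)

end Essential

/-- Proposition: for a prime module `M` and `K ≤ M`, the following are equivalent:
(1) `K` is essential; (2) `K` is u-(R∖𝔭)-essential for every prime `𝔭`;
(3) `K` is u-(R∖𝔪)-essential for every maximal `𝔪`. -/
theorem essential_iff_uSEssential_primes_of_primeModule {R : Type*} [CommRing R] [Nontrivial R]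
    {M : Type*} [AddCommGroup M] [Module R M] (hM : IsPrimeModule R M) (K : Submodule R M) :
    (EssentialSub K ↔
      ∀ (𝔭 : Ideal R) (hp : 𝔭.IsPrime), USEssential (@Ideal.primeCompl R _ 𝔭 hp) K) ∧
    (EssentialSub K ↔
      ∀ (𝔪 : Ideal R) (hm : 𝔪.IsMaximal),
        USEssential (@Ideal.primeCompl R _ 𝔪 hm.isPrime) K) := by
  refine ⟨⟨fun hK _ _ => ?_, fun hprime => ?_⟩, ⟨fun hK _ _ => ?_, fun hmax => ?_⟩⟩
  · exact hK.uSEssential hM _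
  · exact essentialSub_of_forall_isMaximal fun 𝔪 hm => hprime 𝔪 hm.isPrime
  · exact hK.uSEssential hM _
  · exact essentialSub_of_forall_isMaximal hmax
end

section
/- Let R be a commutative ring, S a multiplicative subset of R, and f : M → N an R-linear map of R-modules. If Q is a u-S-essential submodule of N, then the preimage f⁻¹(Q) is a u-S-essential submodule of M. -/
section USTorsion

variable {R M N : Type*} [Semiring R] [AddCommMonoid M] [Module R M] [AddCommMonoid N] [Module R N]
  {S : Submonoid R}

/-- `L` is u-`S`-torsion (uniformly `S`-torsion): a single element of `S` annihilates all of `L`.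
Stated for submodules, so that it applies to the submodules `K ⊓ L` and `L` in `USEssential`. -/
def USTorsion (S : Submonoid R) (L : Submodule R M) : Prop :=
  ∃ s ∈ S, ∀ x ∈ L, s • x = 0

namespace USTorsion

theorem mono {K L : Submodule R M} (hL : USTorsion S L) (hKL : K ≤ L) : USTorsion S K := by
  obtain ⟨s, hs, hsL⟩ := hL
  exact ⟨s, hs, fun x hx => hsL x (hKL hx)⟩

theorem map {L : Submodule R M} (hL : USTorsion S L) (f : M →ₗ[R] N) : USTorsion S (L.map f) := by
  obtain ⟨s, hs, hsL⟩ := hL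
  refine ⟨s, hs, ?_⟩
  rintro _ ⟨x, hx, rfl⟩
  rw [← map_smul, hsL x hx, map_zero]

-- Closure of u-`S`-torsion under the extension `0 → ker f ⊓ L → L → f(L) → 0`.
theorem of_map_of_ker_inf {f : M →ₗ[R] N} {L : Submodule R M} (h_map : USTorsion S (L.map f))
    (h_ker : USTorsion S (f.ker ⊓ L)) : USTorsion S L := by
  obtain ⟨s, hs, hs_map⟩ := h_map
  obtain ⟨t, ht, ht_ker⟩ := h_ker
  refine ⟨t * s, S.mul_mem ht hs, fun x hx => ?_⟩
  have hsx_ker : s • x ∈ f.ker := by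
    rw [LinearMap.mem_ker, map_smul, hs_map (f x) (Submodule.mem_map_of_mem hx)]
  rw [mul_smul, ht_ker (s • x) ⟨hsx_ker, L.smul_mem s hx⟩]

end USTorsion

end USTorsion

theorem uSEssential_iff_forall_uSTorsion {R M : Type*} [CommRing R] [AddCommGroup M] [Module R M]
    {S : Submonoid R} {K : Submodule R M} :
    USEssential S K ↔ ∀ L : Submodule R M, USTorsion S (K ⊓ L) → USTorsion S L :=
  Iff.rfl

/-- Proposition (prop5 (1)): preimages of u-S-essential submodules under linear maps
are u-S-essential. -/
theorem uSEssential_comap {R : Type*} [CommRing R] [Nontrivial R] (S : Submonoid R)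
    (hS0 : (0 : R) ∉ S) {M N : Type*} [AddCommGroup M] [Module R M]
    [AddCommGroup N] [Module R N] (f : M →ₗ[R] N) (Q : Submodule R N)
    (hQ : USEssential S Q) :
    USEssential S (Q.comap f) := by
  rw [uSEssential_iff_forall_uSTorsion] at hQ ⊢
  intro L h_inf
  have h_map_inf : USTorsion S (Q ⊓ L.map f) := by
    rw [inf_comm, Submodule.map_inf_eq_map_inf_comap, inf_comm]
    exact h_inf.map f
  have h_ker_inf : USTorsion S (f.ker ⊓ L) :=
    h_inf.mono (inf_le_inf_right L (LinearMap.ker_le_comap f))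
  exact USTorsion.of_map_of_ker_inf (hQ (L.map f) h_map_inf) h_ker_inf
end

section
/- Let R be a commutative ring, S a multiplicative subset of R, M an R-module, and E a u-S-injective R-module. An R-linear map f : M → E is a u-S-injective u-S-preenvelope of M (i.e., for every u-S-injective R-module E' there exists s ∈ S such that for every R-linear map h : M → E' there is an R-linear map g : E → E' with s • h = g ∘ f) if and only if f is a u-S-monomorphism. -/
/-!
For the nontrivial direction, embed `M` into an injective module by some `ι`. Injective modules are
u-S-injective, so the preenvelope property yields `s • ι = g ∘ f` for some `s ∈ S`. Since `s • ι` is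
a u-S-monomorphism, so is its right factor `f`.
-/

universe u

/-- `f` is a u-S-monomorphism: its kernel is u-S-torsion. -/
def IsUSMono {R : Type*} [CommRing R] (S : Submonoid R) {M N : Type*}
    [AddCommGroup M] [Module R M] [AddCommGroup N] [Module R N] (f : M →ₗ[R] N) : Prop :=
  ∃ s ∈ S, ∀ x ∈ LinearMap.ker f, s • x = 0

/-- `f` is a u-S-epimorphism: its cokernel is u-S-torsion. -/
def IsUSEpi {R : Type*} [CommRing R] (S : Submonoid R) {M N : Type*}
    [AddCommGroup M] [Module R M] [AddCommGroup N] [Module R N] (f : M →ₗ[R] N) : Prop :=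
  ∃ s ∈ S, ∀ y : N, s • y ∈ LinearMap.range f

/-- `f` is a u-S-isomorphism: both a u-S-monomorphism and a u-S-epimorphism. -/
def IsUSIso {R : Type*} [CommRing R] (S : Submonoid R) {M N : Type*}
    [AddCommGroup M] [Module R M] [AddCommGroup N] [Module R N] (f : M →ₗ[R] N) : Prop :=
  IsUSMono S f ∧ IsUSEpi S f

/-- `E` is u-S-injective: for every u-S-monomorphism `f : A → B` there is `s ∈ S` such
that every `h : A → E` factors as `s • h = g ∘ f` for some `g : B → E`. -/
def IsUSInjective {R : Type u} [CommRing R] (S : Submonoid R) (E : Type u)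
    [AddCommGroup E] [Module R E] : Prop :=
  ∀ (A B : Type u) [AddCommGroup A] [Module R A] [AddCommGroup B] [Module R B]
    (f : A →ₗ[R] B), IsUSMono S f →
      ∃ s ∈ S, ∀ h : A →ₗ[R] E, ∃ g : B →ₗ[R] E, s • h = g ∘ₗ f

universe v

lemma exists_comp_eq_of_ker_le_ker {R Q A B : Type*} [Ring R] [AddCommGroup Q] [Module R Q]
    [AddCommGroup A] [Module R A] [AddCommGroup B] [Module R B] (hQ : Module.Baer R Q)
    {f : A →ₗ[R] B} {h : A →ₗ[R] Q} (hker : LinearMap.ker f ≤ LinearMap.ker h) :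
    ∃ g : B →ₗ[R] Q, g ∘ₗ f = h := by
  let fbar := (LinearMap.ker f).liftQ f le_rfl
  let hbar := (LinearMap.ker f).liftQ h hker
  have fbar_injective : Function.Injective fbar :=
    LinearMap.ker_eq_bot.1 (Submodule.ker_liftQ_eq_bot _ _ _ le_rfl)
  obtain ⟨g, hg⟩ : ∃ g, g ∘ₗ fbar = hbar := hQ.extension_property fbar fbar_injective hbar
  refine ⟨g, ?_⟩
  calc g ∘ₗ f = (g ∘ₗ fbar) ∘ₗ (LinearMap.ker f).mkQ := by
        rw [LinearMap.comp_assoc, Submodule.liftQ_mkQ]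
    _ = h := by rw [hg, Submodule.liftQ_mkQ]

lemma exists_injective_linearMap_to_injective (R : Type u) [Ring R] (M : Type v) [Small.{v} R]
    [AddCommGroup M] [Module R M] :
    ∃ (J : Type v) (_ : AddCommGroup J) (_ : Module R J) (ι : M →ₗ[R] J),
      Module.Injective R J ∧ Function.Injective ι := by
  obtain ⟨J, hJ, ι, hι⟩ := CategoryTheory.EnoughInjectives.presentation (ModuleCat.of R M)
  exact ⟨J, inferInstance, inferInstance, ι.hom,
    Module.injective_module_of_injective_object R J (inj := hJ),
    (ModuleCat.mono_iff_injective ι).1 hι⟩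

namespace IsUSMono

variable {R M N P : Type*} [CommRing R] {S : Submonoid R} [AddCommGroup M] [Module R M]
  [AddCommGroup N] [Module R N]

lemma of_injective {f : M →ₗ[R] N} (hf : Function.Injective f) : IsUSMono S f :=
  ⟨1, S.one_mem, fun x hx => by rw [one_smul, hf (hx.trans f.map_zero.symm)]⟩

lemma smul {f : M →ₗ[R] N} (hf : IsUSMono S f) {s : R} (hs : s ∈ S) : IsUSMono S (s • f) := by
  obtain ⟨t, ht, hker⟩ := hf
  refine ⟨t * s, S.mul_mem ht hs, fun x hx => ?_⟩
  have hsx : s • x ∈ LinearMap.ker f := by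
    rwa [LinearMap.mem_ker, map_smul]
  rw [mul_smul, hker _ hsx]

lemma of_comp [AddCommGroup P] [Module R P] {g : N →ₗ[R] P} {f : M →ₗ[R] N}
    (hgf : IsUSMono S (g ∘ₗ f)) : IsUSMono S f := by
  obtain ⟨s, hs, hker⟩ := hgf
  exact ⟨s, hs, fun x hx => hker x (LinearMap.ker_le_ker_comp f g hx)⟩

end IsUSMono

lemma IsUSInjective.of_injective {R : Type u} [CommRing R] (S : Submonoid R) {J : Type u}
    [AddCommGroup J] [Module R J] (hJ : Module.Injective R J) : IsUSInjective S J := by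
  rintro A B _ _ _ _ f ⟨s, hs, hker⟩
  refine ⟨s, hs, fun h => ?_⟩
  have ker_le : LinearMap.ker f ≤ LinearMap.ker (s • h) := fun x hx => by
    rw [LinearMap.mem_ker, LinearMap.smul_apply, ← map_smul, hker x hx, map_zero]
  obtain ⟨g, hg⟩ := exists_comp_eq_of_ker_le_ker (Module.Baer.of_injective hJ) ker_le
  exact ⟨g, hg.symm⟩

theorem uSInjPreenvelope_iff_uSMono_general {R : Type u} [CommRing R] (S : Submonoid R)
    {M E : Type u} [AddCommGroup M] [Module R M] [AddCommGroup E] [Module R E] (f : M →ₗ[R] E) :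
    (∀ (E' : Type u) [AddCommGroup E'] [Module R E'], IsUSInjective S E' →
        ∃ s ∈ S, ∀ h : M →ₗ[R] E', ∃ g : E →ₗ[R] E', s • h = g ∘ₗ f)
      ↔ IsUSMono S f := by
  constructor
  · intro hpre
    obtain ⟨J, _, _, ι, hJ, hι⟩ := exists_injective_linearMap_to_injective R M
    obtain ⟨s, hs, hfactor⟩ := hpre J (IsUSInjective.of_injective S hJ)
    obtain ⟨g, hg⟩ := hfactor ι
    have hsι : IsUSMono S (s • ι) := (IsUSMono.of_injective hι).smul hs
    exact IsUSMono.of_comp (hg ▸ hsι)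
  · intro hf E' _ _ hE'
    exact hE' M E f hf

/-- Proposition (propn1 (1)): for `E` u-S-injective, `f : M → E` is a u-S-injective
u-S-preenvelope of `M` iff `f` is a u-S-monomorphism. -/
theorem uSInjPreenvelope_iff_uSMono {R : Type u} [CommRing R] [Nontrivial R]
    (S : Submonoid R) (hS0 : (0 : R) ∉ S) {M E : Type u} [AddCommGroup M] [Module R M]
    [AddCommGroup E] [Module R E] (hE : IsUSInjective S E) (f : M →ₗ[R] E) :
    (∀ (E' : Type u) [AddCommGroup E'] [Module R E'], IsUSInjective S E' →
        ∃ s ∈ S, ∀ h : M →ₗ[R] E', ∃ g : E →ₗ[R] E', s • h = g ∘ₗ f)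
      ↔ IsUSMono S f :=
  uSInjPreenvelope_iff_uSMono_general S f
end

section
/- Let R be a commutative ring, S a multiplicative subset of R, M an R-module, and f : M → E a u-S-monomorphism with E u-S-injective. Then f is a u-S-injective u-S-envelope of M if and only if range f is a u-S-essential submodule of E. -/
/-!
A linear map out of a module with a u-S-essential submodule is a u-S-monomorphism as soon as its
restriction to that submodule is one; this is the uniform version of the usual test for essential
extensions.

Suppose `f : M → E` is a u-S-monomorphism whose range is u-S-essential and `α ∘ f = s • f`. By the
test, `α` is a u-S-monomorphism, so u-S-injectivity of `E` yields `g` with `g ∘ α = t • id`. Then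
`s • (g ∘ f) = t • f`, so the test applies to `g` as well, and from `g ∘ (α ∘ g - t • id) = 0` it
follows that `α ∘ g` and `t • id` agree up to `S`. Hence `α` is also a u-S-epimorphism.

Conversely, suppose `f` is an envelope and `L` meets `range f` in a u-S-torsion module. Then
`M → E → E ⧸ L` is still a u-S-monomorphism, so some `t • f` factors through it. The resulting
endomorphism `E → E ⧸ L → E` is a u-S-isomorphism killing `L`, so `L` is u-S-torsion.
-/

universe u

/-- `f : M → E` with `E` u-S-injective is a u-S-injective u-S-preenvelope of `M`:
for every u-S-injective `E'` there is `s ∈ S` such that every `h : M → E'` factors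
as `s • h = g ∘ f` for some `g : E → E'`. -/
def USInjPreenvelope {R : Type u} [CommRing R] (S : Submonoid R) {M E : Type u}
    [AddCommGroup M] [Module R M] [AddCommGroup E] [Module R E] (f : M →ₗ[R] E) : Prop :=
  IsUSInjective S E ∧
    ∀ (E' : Type u) [AddCommGroup E'] [Module R E'], IsUSInjective S E' →
      ∃ s ∈ S, ∀ h : M →ₗ[R] E', ∃ g : E →ₗ[R] E', s • h = g ∘ₗ f

/-- A u-S-injective u-S-preenvelope `f : M → E` is a u-S-injective u-S-envelope if every
endomorphism `α` of `E` with `s • f = α ∘ f` for some `s ∈ S` is a u-S-isomorphism. -/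
def USInjEnvelope {R : Type u} [CommRing R] (S : Submonoid R) {M E : Type u}
    [AddCommGroup M] [Module R M] [AddCommGroup E] [Module R E] (f : M →ₗ[R] E) : Prop :=
  USInjPreenvelope S f ∧
    ∀ α : E →ₗ[R] E, (∃ s ∈ S, s • f = α ∘ₗ f) → IsUSIso S α

section USMono

variable {R : Type*} [CommRing R] {S : Submonoid R} {M N P : Type*}
  [AddCommGroup M] [Module R M] [AddCommGroup N] [Module R N] [AddCommGroup P] [Module R P]

lemma IsUSMono.of_comp_s15 {f : M →ₗ[R] N} {g : N →ₗ[R] P} (h : IsUSMono S (g ∘ₗ f)) :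
    IsUSMono S f := by
  obtain ⟨s, hs, hker⟩ := h
  exact ⟨s, hs, fun x hx => hker x (LinearMap.ker_le_ker_comp f g hx)⟩

lemma IsUSMono.smul_s15 {f : M →ₗ[R] N} (hf : IsUSMono S f) {s : R} (hs : s ∈ S) :
    IsUSMono S (s • f) := by
  obtain ⟨t, ht, hker⟩ := hf
  refine ⟨t * s, S.mul_mem ht hs, fun x hx => ?_⟩
  have hsx : s • x ∈ LinearMap.ker f := by
    rwa [LinearMap.mem_ker, map_smul]
  rw [mul_smul, hker _ hsx]

lemma IsUSMono.of_smul {f : M →ₗ[R] N} {s : R} (h : IsUSMono S (s • f)) : IsUSMono S f := by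
  rw [← LinearMap.id_comp f, ← LinearMap.smul_comp] at h
  exact h.of_comp_s15

lemma IsUSMono.comp_of_range_inf_ker {f : M →ₗ[R] N} (hf : IsUSMono S f) {g : N →ₗ[R] P}
    (h : ∃ s ∈ S, ∀ y ∈ LinearMap.range f ⊓ LinearMap.ker g, s • y = 0) :
    IsUSMono S (g ∘ₗ f) := by
  obtain ⟨s, hs, hkerf⟩ := hf
  obtain ⟨t, ht, hinf⟩ := h
  refine ⟨s * t, S.mul_mem hs ht, fun x hx => ?_⟩
  have htx : t • x ∈ LinearMap.ker f := by
    rw [LinearMap.mem_ker, map_smul]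
    exact hinf (f x) ⟨LinearMap.mem_range_self f x, hx⟩
  rw [mul_smul, hkerf _ htx]

lemma USEssential.isUSMono_of_comp {f : M →ₗ[R] N} (hf : USEssential S (LinearMap.range f))
    {g : N →ₗ[R] P} (hgf : IsUSMono S (g ∘ₗ f)) : IsUSMono S g := by
  obtain ⟨s, hs, hker⟩ := hgf
  refine hf (LinearMap.ker g) ⟨s, hs, ?_⟩
  rintro _ ⟨⟨x, rfl⟩, hx⟩
  rw [← map_smul, hker x hx, map_zero]

lemma IsUSMono.isUSEpi_of_smul_id_eq_comp {f : M →ₗ[R] N} {g : N →ₗ[R] M} (hg : IsUSMono S g)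
    {t : R} (ht : t ∈ S) (hgf : t • LinearMap.id = g ∘ₗ f) : IsUSEpi S f := by
  obtain ⟨s, hs, hker⟩ := hg
  refine ⟨s * t, S.mul_mem hs ht, fun y => ⟨s • g y, ?_⟩⟩
  have hmem : f (g y) - t • y ∈ LinearMap.ker g := by
    have hgfg : t • g y = g (f (g y)) := LinearMap.congr_fun hgf (g y)
    rw [LinearMap.mem_ker, map_sub, map_smul, hgfg, sub_self]
  have hdiff : s • f (g y) - s • t • y = 0 := by
    rw [← smul_sub, hker _ hmem]
  rw [map_smul, sub_eq_zero.mp hdiff, mul_smul]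

end USMono

section USInjective

variable {R : Type u} [CommRing R] {S : Submonoid R} {M E : Type u}
  [AddCommGroup M] [Module R M] [AddCommGroup E] [Module R E]

lemma IsUSInjective.exists_smul_id_eq_comp (hE : IsUSInjective S E) {f : E →ₗ[R] M}
    (hf : IsUSMono S f) : ∃ t ∈ S, ∃ g : M →ₗ[R] E, t • LinearMap.id = g ∘ₗ f := by
  obtain ⟨t, ht, hext⟩ := hE E M f hf
  exact ⟨t, ht, hext LinearMap.id⟩

lemma IsUSInjective.uSInjPreenvelope (hE : IsUSInjective S E) {f : M →ₗ[R] E}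
    (hf : IsUSMono S f) : USInjPreenvelope S f :=
  ⟨hE, fun _ _ _ hE' => hE' M E f hf⟩

lemma USEssential.isUSIso_of_smul_eq_comp {f : M →ₗ[R] E}
    (hess : USEssential S (LinearMap.range f)) (hf : IsUSMono S f) (hE : IsUSInjective S E)
    {α : E →ₗ[R] E} {s : R} (hs : s ∈ S) (hα : s • f = α ∘ₗ f) : IsUSIso S α := by
  have hαmono : IsUSMono S α := hess.isUSMono_of_comp (hα ▸ hf.smul_s15 hs)
  obtain ⟨t, ht, g, hg⟩ := hE.exists_smul_id_eq_comp hαmono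
  have hgf : s • (g ∘ₗ f) = t • f :=
    calc s • (g ∘ₗ f) = g ∘ₗ (s • f) := (LinearMap.comp_smul ..).symm
      _ = (g ∘ₗ α) ∘ₗ f := by rw [hα, LinearMap.comp_assoc]
      _ = t • f := by rw [← hg, LinearMap.smul_comp, LinearMap.id_comp]
  have hgfmono : IsUSMono S (g ∘ₗ f) := IsUSMono.of_smul (hgf ▸ hf.smul_s15 ht)
  have hgmono : IsUSMono S g := hess.isUSMono_of_comp hgfmono
  exact ⟨hαmono, hgmono.isUSEpi_of_smul_id_eq_comp ht hg⟩

lemma USInjEnvelope.uSEssential_range {f : M →ₗ[R] E} (h : USInjEnvelope S f)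
    (hf : IsUSMono S f) : USEssential S (LinearMap.range f) := by
  obtain ⟨⟨hE, -⟩, hiso⟩ := h
  intro L hL
  have hmono : IsUSMono S (L.mkQ ∘ₗ f) :=
    hf.comp_of_range_inf_ker (by rwa [Submodule.ker_mkQ])
  obtain ⟨t, ht, hext⟩ := hE M (E ⧸ L) (L.mkQ ∘ₗ f) hmono
  obtain ⟨g, hg⟩ := hext f
  have hα : IsUSIso S (g ∘ₗ L.mkQ) := hiso (g ∘ₗ L.mkQ) ⟨t, ht, hg⟩
  simpa only [IsUSMono, Submodule.ker_mkQ] using hα.1.of_comp_s15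

end USInjective

/-- Theorem (thmn1): a u-S-monomorphism `f : M → E` with `E` u-S-injective is a
u-S-injective u-S-envelope of `M` iff `range f` is a u-S-essential submodule of `E`. -/
theorem uSInjEnvelope_iff_uSEssential_range {R : Type u} [CommRing R] [Nontrivial R]
    (S : Submonoid R) (hS0 : (0 : R) ∉ S) {M E : Type u} [AddCommGroup M] [Module R M]
    [AddCommGroup E] [Module R E] (f : M →ₗ[R] E) (hf : IsUSMono S f)
    (hE : IsUSInjective S E) :
    USInjEnvelope S f ↔ USEssential S (LinearMap.range f) := by
  constructor
  · intro henv
    exact henv.uSEssential_range hf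
  · intro hess
    refine ⟨hE.uSInjPreenvelope hf, ?_⟩
    rintro α ⟨s, hs, hα⟩
    exact hess.isUSIso_of_smul_eq_comp hf hE hs hα
end

section
/- Let R be a commutative ring, S a multiplicative subset of R, and M₁, …, Mₙ a finite family of R-modules. If fᵢ : Mᵢ → Eᵢ is a u-S-injective u-S-envelope of Mᵢ for each i = 1, …, n, then the direct sum map ⊕ᵢ fᵢ : ⊕ᵢ₌₁ⁿ Mᵢ → ⊕ᵢ₌₁ⁿ Eᵢ is a u-S-injective u-S-envelope of ⊕ᵢ₌₁ⁿ Mᵢ; in particular, E_{u-S}(⊕ᵢ₌₁ⁿ Mᵢ) is u-S-isomorphic to ⊕ᵢ₌₁ⁿ E_{u-S}(Mᵢ). -/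
universe u

/-!
In the category of `R`-modules with the u-S-isomorphisms inverted, a map `f : M → E` is left minimal
if and only if every map `γ` out of `E` with `γ ∘ f = 0` lies in the Jacobson radical of that
category. The radical is a two-sided ideal, by the usual arguments: it absorbs composition on the
right because `1 + βα` is invertible when `1 + αβ` is, and it is closed under addition because
`b (1 + β (γ + δ)) = 1 + b β δ` for `b` the inverse of `1 + β γ`. A map `γ` that kills
`⊕ᵢ fᵢ` is the finite sum of the `γ ∘ ιᵢ ∘ πᵢ`, and `γ ∘ ιᵢ` kills `fᵢ`, so `γ` lies in the radical.
-/

section TwoOfThree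

variable {R : Type*} [CommRing R] {S : Submonoid R} {M N P : Type*}
  [AddCommGroup M] [Module R M] [AddCommGroup N] [Module R N] [AddCommGroup P] [Module R P]
  {α : M →ₗ[R] N} {β : N →ₗ[R] P}

lemma IsUSMono.of_comp_s18 (h : IsUSMono S (β ∘ₗ α)) : IsUSMono S α := by
  obtain ⟨s, hs, hker⟩ := h
  exact ⟨s, hs, fun x hx => hker x (LinearMap.ker_le_ker_comp α β hx)⟩

lemma IsUSEpi.of_comp_s18 (h : IsUSEpi S (β ∘ₗ α)) : IsUSEpi S β := by
  obtain ⟨s, hs, hrange⟩ := h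
  exact ⟨s, hs, fun y => LinearMap.range_comp_le_range α β (hrange y)⟩

lemma IsUSMono.of_comp_right (h : IsUSMono S (β ∘ₗ α)) (hα : IsUSEpi S α) : IsUSMono S β := by
  obtain ⟨s, hs, hker⟩ := h
  obtain ⟨t, ht, hrange⟩ := hα
  refine ⟨s * t, S.mul_mem hs ht, fun y hy => ?_⟩
  obtain ⟨x, hx⟩ := hrange y
  have hβαx : β (α x) = 0 := by rw [hx, map_smul, LinearMap.mem_ker.1 hy, smul_zero]
  rw [mul_smul, ← hx, ← map_smul, hker x hβαx, map_zero]

lemma IsUSEpi.of_comp_left (h : IsUSEpi S (β ∘ₗ α)) (hβ : IsUSMono S β) : IsUSEpi S α := by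
  obtain ⟨s, hs, hrange⟩ := h
  obtain ⟨t, ht, hker⟩ := hβ
  refine ⟨t * s, S.mul_mem ht hs, fun y => ?_⟩
  obtain ⟨x, hx⟩ := hrange (β y)
  have hdiff : α x - s • y ∈ LinearMap.ker β := by
    rw [LinearMap.mem_ker, map_sub, map_smul, ← hx, LinearMap.comp_apply, sub_self]
  refine ⟨t • x, ?_⟩
  rw [map_smul, mul_smul, ← sub_eq_zero, ← smul_sub, hker _ hdiff]

lemma IsUSIso.of_comp_left (h : IsUSIso S (β ∘ₗ α)) (hβ : IsUSIso S β) : IsUSIso S α :=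
  ⟨h.1.of_comp_s18, h.2.of_comp_left hβ.1⟩

lemma IsUSIso.of_comp_right (h : IsUSIso S (β ∘ₗ α)) (hα : IsUSIso S α) : IsUSIso S β :=
  ⟨h.1.of_comp_right hα.2, h.2.of_comp_s18⟩

end TwoOfThree

section Radical

variable {R : Type*} [CommRing R] {S : Submonoid R} {M N P : Type*}
  [AddCommGroup M] [Module R M] [AddCommGroup N] [Module R N] [AddCommGroup P] [Module R P]

lemma isUSIso_smul_id {s : R} (hs : s ∈ S) : IsUSIso S (s • LinearMap.id : M →ₗ[R] M) :=
  ⟨⟨s, hs, fun _ hx => hx⟩, ⟨s, hs, fun y => ⟨y, rfl⟩⟩⟩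

lemma IsUSIso.exists_comp_eq_smul_id {α : M →ₗ[R] N} (hα : IsUSIso S α) :
    ∃ t ∈ S, ∃ β : N →ₗ[R] M, β ∘ₗ α = t • LinearMap.id := by
  obtain ⟨⟨s, hs, hker⟩, ⟨t, ht, hrange⟩⟩ := hα
  let toRange : N →ₗ[R] LinearMap.range α := (t • LinearMap.id).codRestrict _ hrange
  let ofQuotient : (M ⧸ LinearMap.ker α) →ₗ[R] M :=
    (LinearMap.ker α).liftQ (s • LinearMap.id) fun x hx => LinearMap.mem_ker.2 (hker x hx)
  refine ⟨s * t, S.mul_mem hs ht,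
    ofQuotient ∘ₗ α.quotKerEquivRange.symm.toLinearMap ∘ₗ toRange, LinearMap.ext fun x => ?_⟩
  have htoRange : toRange (α x) = t • α.quotKerEquivRange (Submodule.Quotient.mk x) := rfl
  simp only [LinearMap.comp_apply, LinearEquiv.coe_coe, htoRange, map_smul,
    LinearEquiv.symm_apply_apply]
  exact (smul_smul t s x).trans (congrArg (· • x) (mul_comm t s))

lemma IsUSIso.smul_id_add_comp_swap {s : R} (hs : s ∈ S) {α : M →ₗ[R] N} {β : N →ₗ[R] M}
    (h : IsUSIso S (s • LinearMap.id + α ∘ₗ β)) : IsUSIso S (s • LinearMap.id + β ∘ₗ α) := by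
  obtain ⟨⟨t, ht, hker⟩, ⟨r, hr, hrange⟩⟩ := h
  refine ⟨⟨t * s, S.mul_mem ht hs, fun x hx => ?_⟩, ⟨s * r, S.mul_mem hs hr, fun y => ?_⟩⟩
  · have hx' : s • x + β (α x) = 0 := hx
    have hαx : t • α x = 0 := hker (α x) <| show s • α x + α (β (α x)) = 0 by
      simpa only [map_add, map_smul, map_zero] using congrArg α hx'
    calc (t * s) • x = t • (s • x + β (α x)) - β (t • α x) := by rw [map_smul]; module
      _ = 0 := by rw [hx', hαx, smul_zero, map_zero, sub_zero]
  · obtain ⟨z, hz⟩ := hrange (α y)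
    have hz' : s • z + α (β z) = r • α y := hz
    refine ⟨r • y - β z, ?_⟩
    calc s • (r • y - β z) + β (α (r • y - β z))
        = (s * r) • y + β (r • α y) - β (s • z + α (β z)) := by
          simp only [map_sub, map_add, map_smul]; module
      _ = (s * r) • y := by rw [hz', add_sub_cancel_right]

variable (S M N) in
/-- The Hom-set from `M` to `N` of the Jacobson radical of the category of `R`-modules up to
u-S-isomorphism. As `s ∈ S` becomes invertible there, `s • id` takes the place of the identity. -/
def usRadical : Submodule R (M →ₗ[R] N) where
  carrier := {γ | ∀ β : N →ₗ[R] M, ∀ s ∈ S, IsUSIso S (s • LinearMap.id + β ∘ₗ γ)}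
  zero_mem' β s hs := by simpa only [LinearMap.comp_zero, add_zero] using isUSIso_smul_id hs
  add_mem' {γ δ} hγ hδ β s hs := by
    obtain ⟨t, ht, b, hb⟩ := (hγ β s hs).exists_comp_eq_smul_id
    have hb_iso : IsUSIso S b :=
      IsUSIso.of_comp_right (hb ▸ isUSIso_smul_id ht) (hγ β s hs)
    have hcomp : b ∘ₗ (s • LinearMap.id + β ∘ₗ (γ + δ)) = t • LinearMap.id + (b ∘ₗ β) ∘ₗ δ := by
      rw [LinearMap.comp_add _ _ β, ← add_assoc, LinearMap.comp_add, hb, LinearMap.comp_assoc]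
    exact IsUSIso.of_comp_left (hcomp ▸ hδ (b ∘ₗ β) t ht) hb_iso
  smul_mem' r γ hγ β s hs := by
    simpa only [LinearMap.comp_smul, LinearMap.smul_comp] using hγ (r • β) s hs

lemma mem_usRadical {γ : M →ₗ[R] N} :
    γ ∈ usRadical S M N ↔
      ∀ β : N →ₗ[R] M, ∀ s ∈ S, IsUSIso S (s • LinearMap.id + β ∘ₗ γ) :=
  Iff.rfl

lemma comp_mem_usRadical {γ : N →ₗ[R] P} (hγ : γ ∈ usRadical S N P) (α : M →ₗ[R] N) :
    γ ∘ₗ α ∈ usRadical S M P :=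
  mem_usRadical.2 fun β s hs =>
    IsUSIso.smul_id_add_comp_swap (α := α) (β := β ∘ₗ γ) hs (mem_usRadical.1 hγ (α ∘ₗ β) s hs)

end Radical

section LeftMinimal

/-- `f : M → E` is left minimal up to u-S-isomorphism. This is the condition that a u-S-injective
u-S-envelope satisfies beyond being a preenvelope. -/
def IsUSLeftMinimal {R : Type*} [CommRing R] (S : Submonoid R) {M E : Type*}
    [AddCommGroup M] [Module R M] [AddCommGroup E] [Module R E] (f : M →ₗ[R] E) : Prop :=
  ∀ α : E →ₗ[R] E, (∃ s ∈ S, s • f = α ∘ₗ f) → IsUSIso S α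

variable {R : Type*} [CommRing R] {S : Submonoid R}

section

variable {M E N : Type*} [AddCommGroup M] [Module R M] [AddCommGroup E] [Module R E]
  [AddCommGroup N] [Module R N] {f : M →ₗ[R] E}

lemma IsUSLeftMinimal.mem_usRadical (hf : IsUSLeftMinimal S f) {γ : E →ₗ[R] N}
    (hγ : γ ∘ₗ f = 0) : γ ∈ usRadical S E N :=
  fun β s hs => hf _ ⟨s, hs, by
    rw [LinearMap.add_comp, LinearMap.comp_assoc, hγ, LinearMap.comp_zero, add_zero,
      LinearMap.smul_comp, LinearMap.id_comp]⟩

lemma IsUSLeftMinimal.of_forall_mem_usRadical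
    (h : ∀ γ : E →ₗ[R] E, γ ∘ₗ f = 0 → γ ∈ usRadical S E E) : IsUSLeftMinimal S f := by
  rintro α ⟨s, hs, hα⟩
  have hcomp : (α - s • LinearMap.id) ∘ₗ f = 0 := by
    rw [LinearMap.sub_comp, ← hα, LinearMap.smul_comp, LinearMap.id_comp, sub_self]
  simpa only [LinearMap.id_comp, add_sub_cancel] using h _ hcomp LinearMap.id s hs

end

lemma IsUSLeftMinimal.pi {ι : Type*} [Finite ι] {M E : ι → Type*}
    [∀ i, AddCommGroup (M i)] [∀ i, Module R (M i)] [∀ i, AddCommGroup (E i)]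
    [∀ i, Module R (E i)] {f : ∀ i, M i →ₗ[R] E i} (hf : ∀ i, IsUSLeftMinimal S (f i)) :
    IsUSLeftMinimal S (LinearMap.pi fun i => f i ∘ₗ LinearMap.proj i) := by
  classical
  have := Fintype.ofFinite ι
  refine IsUSLeftMinimal.of_forall_mem_usRadical fun γ hγ => ?_
  have hγ_single (i : ι) : (γ ∘ₗ LinearMap.single R E i) ∘ₗ f i = 0 := by
    have hsingle : LinearMap.single R E i ∘ₗ f i =
        (LinearMap.pi fun j => f j ∘ₗ LinearMap.proj j) ∘ₗ LinearMap.single R M i :=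
      LinearMap.ext fun x => funext fun j =>
        (Pi.apply_single (fun j => f j) (fun j => map_zero (f j)) i x j).symm
    rw [LinearMap.comp_assoc, hsingle, ← LinearMap.comp_assoc, hγ, LinearMap.zero_comp]
  have hγ_sum : γ = ∑ i, (γ ∘ₗ LinearMap.single R E i) ∘ₗ LinearMap.proj i := by
    refine LinearMap.ext fun x => ?_
    calc γ x = γ (∑ i, Pi.single i (x i)) := by rw [Finset.univ_sum_single]
      _ = (∑ i, (γ ∘ₗ LinearMap.single R E i) ∘ₗ LinearMap.proj i) x := by
        simp only [map_sum, LinearMap.sum_apply, LinearMap.comp_apply, LinearMap.proj_apply,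
          LinearMap.single_apply]
  rw [hγ_sum]
  exact Submodule.sum_mem _ fun i _ => comp_mem_usRadical ((hf i).mem_usRadical (hγ_single i)) _

end LeftMinimal

section Preenvelope

lemma IsUSEpi.exists_forall_smul_mem_range {R : Type*} [CommRing R] {S : Submonoid R} {ι : Type*}
    [Finite ι] {A B : ι → Type*} [∀ i, AddCommGroup (A i)] [∀ i, Module R (A i)]
    [∀ i, AddCommGroup (B i)] [∀ i, Module R (B i)] {φ : ∀ i, A i →ₗ[R] B i}
    (hφ : ∀ i, IsUSEpi S (φ i)) : ∃ s ∈ S, ∀ i (y : B i), s • y ∈ LinearMap.range (φ i) := by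
  have := Fintype.ofFinite ι
  choose s hs hrange using hφ
  refine ⟨∏ i, s i, S.prod_mem fun i _ => hs i, fun i y => ?_⟩
  obtain ⟨c, hc⟩ := Finset.dvd_prod_of_mem s (Finset.mem_univ i)
  rw [hc, mul_smul]
  exact hrange i (c • y)

lemma isUSEpi_lcomp_iff {R : Type*} [CommRing R] {S : Submonoid R} {A B E : Type*}
    [AddCommGroup A] [Module R A] [AddCommGroup B] [Module R B] [AddCommGroup E] [Module R E]
    {φ : A →ₗ[R] B} :
    IsUSEpi S (φ.lcomp R E) ↔ ∃ s ∈ S, ∀ h : A →ₗ[R] E, ∃ g : B →ₗ[R] E, s • h = g ∘ₗ φ := by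
  simp only [IsUSEpi, LinearMap.mem_range, LinearMap.lcomp_apply', eq_comm]

-- `ι : Type` keeps the products in the universe `u` over which u-S-injectivity quantifies.
variable {R : Type u} [CommRing R] {S : Submonoid R} {ι : Type} [Finite ι] {M E : ι → Type u}
  [∀ i, AddCommGroup (M i)] [∀ i, Module R (M i)] [∀ i, AddCommGroup (E i)]
  [∀ i, Module R (E i)]

lemma IsUSInjective.pi (hE : ∀ i, IsUSInjective S (E i)) : IsUSInjective S (∀ i, E i) := by
  intro A B _ _ _ _ φ hφ
  obtain ⟨s, hs, hext⟩ :=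
    IsUSEpi.exists_forall_smul_mem_range fun i => isUSEpi_lcomp_iff.2 (hE i A B φ hφ)
  refine ⟨s, hs, fun h => ?_⟩
  choose g hg using fun i => hext i (LinearMap.proj i ∘ₗ h)
  exact ⟨LinearMap.pi g, LinearMap.ext fun x => funext fun i =>
    (LinearMap.congr_fun (hg i) x).symm⟩

lemma USInjPreenvelope.pi {f : ∀ i, M i →ₗ[R] E i} (hf : ∀ i, USInjPreenvelope S (f i)) :
    USInjPreenvelope S (LinearMap.pi fun i => f i ∘ₗ LinearMap.proj i) := by
  classical
  have := Fintype.ofFinite ι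
  refine ⟨IsUSInjective.pi fun i => (hf i).1, fun E' _ _ hE' => ?_⟩
  obtain ⟨s, hs, hext⟩ :=
    IsUSEpi.exists_forall_smul_mem_range fun i => isUSEpi_lcomp_iff.2 ((hf i).2 E' hE')
  refine ⟨s, hs, fun h => ?_⟩
  choose g hg using fun i => hext i (h ∘ₗ LinearMap.single R M i)
  refine ⟨∑ i, g i ∘ₗ LinearMap.proj i, LinearMap.ext fun m => ?_⟩
  have hgm (i : ι) : g i (f i (m i)) = s • h (Pi.single i (m i)) :=
    LinearMap.congr_fun (hg i) (m i)
  calc s • h m = ∑ i, s • h (Pi.single i (m i)) := by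
        rw [← Finset.smul_sum, ← map_sum, Finset.univ_sum_single]
    _ = ∑ i, g i (f i (m i)) := by simp only [hgm]
    _ = (∑ i, g i ∘ₗ LinearMap.proj i) fun i => f i (m i) := by
        simp only [LinearMap.sum_apply, LinearMap.comp_apply, LinearMap.proj_apply]

end Preenvelope

/-- Theorem: if `fᵢ : Mᵢ → Eᵢ` is a u-S-injective u-S-envelope for each `i = 1, …, n`,
then the direct sum map `⊕ᵢ fᵢ : ⊕ᵢ Mᵢ → ⊕ᵢ Eᵢ` is a u-S-injective u-S-envelope of
`⊕ᵢ Mᵢ` (hence `E_{u-S}(⊕ᵢ Mᵢ)` is u-S-isomorphic to `⊕ᵢ E_{u-S}(Mᵢ)`). -/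
theorem uSInjEnvelope_finite_directSum {R : Type u} [CommRing R] [Nontrivial R]
    (S : Submonoid R) (hS0 : (0 : R) ∉ S) {n : ℕ} {M E : Fin n → Type u}
    [∀ i, AddCommGroup (M i)] [∀ i, Module R (M i)]
    [∀ i, AddCommGroup (E i)] [∀ i, Module R (E i)]
    (f : ∀ i, M i →ₗ[R] E i) (hf : ∀ i, USInjEnvelope S (f i)) :
    USInjEnvelope S
      (LinearMap.pi (fun i => (f i) ∘ₗ LinearMap.proj i) :
        (∀ i, M i) →ₗ[R] ∀ i, E i) :=
  ⟨USInjPreenvelope.pi fun i => (hf i).1, IsUSLeftMinimal.pi fun i => (hf i).2⟩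
end
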